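/- Let y ∈ ℝᵐ and A ∈ ℝ^{m×n}, where each column a_j of A satisfies ‖a_j‖₂ = 1. Let 𝒢 = {G₁,…,G_g} be a partition of {1,…,n} into g disjoint nonempty subsets, and let λ > 0. Let x̂ be a minimizer over z ∈ ℝⁿ of λ‖y − Az‖₂² + Σ_{i=1}^{g}‖z_{G_i}‖₂ (the Group LASSO regularizer, i.e., the SGL norm with μ = 1). Suppose indices i and j belong to the same group G_s and x̂_i·x̂_j > 0. Then |x̂_i − x̂_j| ≤ 2λ·√(2(1 − a_iᵀa_j))·‖y‖₂·‖x̂_{G_s}‖₂. -/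

import Mathlib

/-- The ℓ¹-norm of a vector in ℝⁿ. -/
noncomputable def l1 {n : ℕ} (x : Fin n → ℝ) : ℝ := ∑ i, |x i|

/-- The ℓ²-norm of a vector in ℝⁿ. -/
noncomputable def l2 {n : ℕ} (x : Fin n → ℝ) : ℝ := Real.sqrt (∑ i, (x i) ^ 2)

/-- The ℓᵖ-norm of a vector in ℝⁿ. -/
noncomputable def lpNorm {n : ℕ} (p : ℝ) (x : Fin n → ℝ) : ℝ := (∑ i, |x i| ^ p) ^ (1 / p)

/-- A vector is `k`-sparse if it has at most `k` nonzero components. -/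
def IsSparse {n : ℕ} (k : ℕ) (x : Fin n → ℝ) : Prop :=
  (Finset.univ.filter (fun i => x i ≠ 0)).card ≤ k

/-- The `k`-sparsity index of `x` with respect to the ℓ¹-norm. -/
noncomputable def sigma1 {n : ℕ} (k : ℕ) (x : Fin n → ℝ) : ℝ :=
  sInf ((fun z => l1 (x - z)) '' {z | IsSparse k z})

/-- The `k`-sparsity index of `x` with respect to the ℓ²-norm. -/
noncomputable def sigma2 {n : ℕ} (k : ℕ) (x : Fin n → ℝ) : ℝ :=
  sInf ((fun z => l2 (x - z)) '' {z | IsSparse k z})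

/-- The vector agreeing with `x` on `S` and zero elsewhere. -/
def proj {n : ℕ} (S : Finset (Fin n)) (x : Fin n → ℝ) : Fin n → ℝ :=
  fun i => if i ∈ S then x i else 0

/-- `G` is a partition of `{1,…,n}` into `g` disjoint nonempty subsets. -/
def IsPartition {n g : ℕ} (G : Fin g → Finset (Fin n)) : Prop :=
  (∀ i, (G i).Nonempty) ∧ (∀ i j, i ≠ j → Disjoint (G i) (G j)) ∧
    (∀ x : Fin n, ∃ i, x ∈ G i)

/-- The Sparse Group LASSO norm associated to the partition `G` with parameter `μ`. -/
noncomputable def sglNorm {n g : ℕ} (G : Fin g → Finset (Fin n)) (μ : ℝ) (z : Fin n → ℝ) : ℝ :=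
  ∑ i, ((1 - μ) * l1 (proj (G i) z) + μ * l2 (proj (G i) z))

/-- `A` satisfies the Restricted Isometry Property of order `k` with constant `δ`. -/
def RIP {m n : ℕ} (A : Matrix (Fin m) (Fin n) ℝ) (k : ℕ) (δ : ℝ) : Prop :=
  ∀ u : Fin n → ℝ, IsSparse k u →
    (1 - δ) * (l2 u) ^ 2 ≤ (l2 (A.mulVec u)) ^ 2 ∧
      (l2 (A.mulVec u)) ^ 2 ≤ (1 + δ) * (l2 u) ^ 2

/-- `A` satisfies the ℓ₂ robust null space property of order `k` with constants `ρ`, `τ`. -/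
def RNSP {m n : ℕ} (A : Matrix (Fin m) (Fin n) ℝ) (k : ℕ) (ρ τ : ℝ) : Prop :=
  ∀ h : Fin n → ℝ, ∀ S : Finset (Fin n), S.card ≤ k →
    l2 (proj S h) ≤ (ρ / Real.sqrt k) * l1 (proj Sᶜ h) +
      (τ / Real.sqrt k) * l2 (A.mulVec h)

lemma l2_sq_aux {n : ℕ} (x : Fin n → ℝ) : (l2 x) ^ 2 = ∑ i, (x i) ^ 2 :=
  Real.sq_sqrt (Finset.sum_nonneg fun _ _ => sq_nonneg _)

lemma l2_nonneg_aux {n : ℕ} (x : Fin n → ℝ) : 0 ≤ l2 x := Real.sqrt_nonneg _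

lemma sum_sq_add_aux {n : ℕ} (p d : Fin n → ℝ) (t : ℝ) :
    ∑ k, (p k + t * d k) ^ 2 = ∑ k, (p k) ^ 2 + 2 * t * ∑ k, p k * d k + t ^ 2 * ∑ k, (d k) ^ 2 := by
  rw [Finset.mul_sum, Finset.mul_sum, ← Finset.sum_add_distrib, ← Finset.sum_add_distrib]
  exact Finset.sum_congr rfl fun k _ => by ring

lemma cs_aux {n : ℕ} (p d : Fin n → ℝ) : |∑ k, p k * d k| ≤ l2 p * l2 d := by
  refine abs_le_of_sq_le_sq ?_ (mul_nonneg (l2_nonneg_aux _) (l2_nonneg_aux _))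
  rw [mul_pow, l2_sq_aux, l2_sq_aux]
  exact Finset.sum_mul_sq_le_sq_mul_sq _ _ _

/-- Grouping effect for the Group LASSO (SGL with μ = 1). -/
theorem stmt5 (m n g : ℕ) (y : Fin m → ℝ) (A : Matrix (Fin m) (Fin n) ℝ)
    (hcols : ∀ j : Fin n, l2 (fun i => A i j) = 1)
    (G : Fin g → Finset (Fin n)) (hG : IsPartition G)
    (lam : ℝ) (hlam : 0 < lam)
    (xh : Fin n → ℝ)
    (hmin : ∀ z : Fin n → ℝ,
      lam * (l2 (y - A.mulVec xh)) ^ 2 + ∑ i, l2 (proj (G i) xh) ≤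
        lam * (l2 (y - A.mulVec z)) ^ 2 + ∑ i, l2 (proj (G i) z))
    (i j : Fin n) (s : Fin g) (hi : i ∈ G s) (hj : j ∈ G s)
    (hprod : 0 < xh i * xh j) :
    |xh i - xh j| ≤ 2 * lam * Real.sqrt (2 * (1 - ∑ r, A r i * A r j)) *
      l2 y * l2 (proj (G s) xh) := by
  obtain ⟨-, hdis, -⟩ := hG
  set N := l2 (proj (G s) xh) with hN
  have hNsq : N ^ 2 = ∑ k, (proj (G s) xh k) ^ 2 := l2_sq_aux _
  have hxi : xh i ≠ 0 := by
    intro h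
    simp [h] at hprod
  have hNpos : 0 < N := by
    have h1 : (proj (G s) xh i) ^ 2 ≤ N ^ 2 := by
      rw [hNsq]
      exact Finset.single_le_sum (f := fun k => (proj (G s) xh k) ^ 2)
        (fun k _ => sq_nonneg _) (Finset.mem_univ i)
    have h2 : 0 < (proj (G s) xh i) ^ 2 := by
      simp only [proj, hi, if_true]
      positivity
    have h3 : 0 ≤ N := l2_nonneg_aux _
    rcases h3.eq_or_lt with h | h
    · rw [← h] at h1
      linarith
    · exact h
  set d : Fin n → ℝ := fun k => (if k = i then 1 else 0) - (if k = j then 1 else 0) with hd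
  set R : Fin m → ℝ := y - A.mulVec xh with hR
  set w : Fin m → ℝ := fun r => A r i - A r j with hw
  have hAd : A.mulVec d = w := by
    ext r
    simp [Matrix.mulVec, dotProduct, hd, hw, mul_sub, Finset.sum_sub_distrib]
  have hpd : ∑ k, proj (G s) xh k * d k = xh i - xh j := by
    simp [hd, mul_sub, Finset.sum_sub_distrib, proj, hi, hj]
  have hdout : ∀ k, k ∉ G s → d k = 0 := by
    intro k hk
    have h1 : k ≠ i := fun h => hk (h ▸ hi)
    have h2 : k ≠ j := fun h => hk (h ▸ hj)
    simp [hd, h1, h2]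
  have key : ∀ t : ℝ, 0 ≤ (lam * ∑ r, (w r) ^ 2 + (∑ k, (d k) ^ 2) / (2 * N)) * (t * t) +
      ((xh i - xh j) / N - 2 * lam * ∑ r, R r * w r) * t + 0 := by
    intro t
    have hm := hmin (xh + t • d)
    have e1 : l2 (y - A.mulVec (xh + t • d)) ^ 2 =
        l2 R ^ 2 + 2 * (-t) * ∑ r, R r * w r + (-t) ^ 2 * ∑ r, (w r) ^ 2 := by
      rw [l2_sq_aux, l2_sq_aux, ← sum_sq_add_aux]
      refine Finset.sum_congr rfl fun r _ => ?_
      rw [Matrix.mulVec_add, Matrix.mulVec_smul, hAd]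
      simp only [hR, Pi.sub_apply, Pi.add_apply, Pi.smul_apply, smul_eq_mul]
      ring
    have e2 : ∀ u, u ≠ s → l2 (proj (G u) (xh + t • d)) = l2 (proj (G u) xh) := by
      intro u hu
      congr 1
      ext k
      by_cases hk : k ∈ G u
      · have := hdout k (fun h => Finset.disjoint_left.mp (hdis u s hu) hk h)
        simp [proj, hk, this]
      · simp [proj, hk]
    have e3 : l2 (proj (G s) (xh + t • d)) ^ 2 =
        N ^ 2 + 2 * t * (xh i - xh j) + t ^ 2 * ∑ k, (d k) ^ 2 := by
      rw [l2_sq_aux, hNsq, ← hpd, ← sum_sq_add_aux]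
      refine Finset.sum_congr rfl fun k _ => ?_
      by_cases hk : k ∈ G s
      · simp [proj, hk]
      · simp [proj, hk, hdout k hk]
    set M := l2 (proj (G s) (xh + t • d)) with hM
    have e4 : M ≤ N + (2 * t * (xh i - xh j) + t ^ 2 * ∑ k, (d k) ^ 2) / (2 * N) := by
      rw [← sub_le_iff_le_add', le_div_iff₀ (by positivity)]
      nlinarith [sq_nonneg (M - N)]
    have e5 : ∑ u, l2 (proj (G u) (xh + t • d)) - ∑ u, l2 (proj (G u) xh) = M - N := by
      rw [← Finset.sum_sub_distrib]
      exact Finset.sum_eq_single s (fun u _ hu => by rw [e2 u hu, sub_self]) (by simp)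
    rw [e1] at hm
    have e6 : (2 * t * (xh i - xh j) + t ^ 2 * ∑ k, (d k) ^ 2) / (2 * N) =
      (xh i - xh j) / N * t + (∑ k, (d k) ^ 2) / (2 * N) * (t * t) := by
      field_simp
    rw [e6] at e4
    linarith
  have hB : (xh i - xh j) / N - 2 * lam * ∑ r, R r * w r = 0 := by
    have h := discrim_le_zero key
    unfold discrim at h
    apply pow_eq_zero_iff (two_ne_zero) |>.mp
    apply le_antisymm _ (sq_nonneg _)
    linarith
  have hx : xh i - xh j = 2 * lam * (∑ r, R r * w r) * N := by
    rw [← div_eq_iff hNpos.ne']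
    linarith
  have hRy : l2 R ≤ l2 y := by
    have h := hmin 0
    have z0 : ∀ u, l2 (proj (G u) (0 : Fin n → ℝ)) = 0 := by
      intro u
      simp [l2, proj]
    have hp : 0 ≤ ∑ u, l2 (proj (G u) xh) := Finset.sum_nonneg fun _ _ => l2_nonneg_aux _
    simp only [z0, Finset.sum_const_zero, Matrix.mulVec_zero, sub_zero, add_zero] at h
    have h2 : lam * l2 R ^ 2 ≤ lam * l2 y ^ 2 := by linarith
    exact (pow_le_pow_iff_left₀ (l2_nonneg_aux _) (l2_nonneg_aux _) two_ne_zero).mp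
      (le_of_mul_le_mul_left h2 hlam)
  have hww : l2 w = Real.sqrt (2 * (1 - ∑ r, A r i * A r j)) := by
    have hc : ∀ k, ∑ r, (A r k) ^ 2 = 1 := by
      intro k
      rw [← l2_sq_aux (fun r => A r k), hcols k, one_pow]
    unfold l2
    congr 1
    have := sum_sq_add_aux (fun r => A r i) (fun r => A r j) (-1)
    rw [hc, hc] at this
    calc ∑ r, (w r) ^ 2 = ∑ r, (A r i + (-1) * A r j) ^ 2 :=
          Finset.sum_congr rfl fun r _ => by simp only [hw]; ring
      _ = _ := by rw [this]; ring
  rw [← hww, hx, abs_mul, abs_mul, abs_of_pos hNpos, abs_of_pos (by positivity : 0 < 2 * lam)]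
  have h1 : |∑ r, R r * w r| ≤ l2 w * l2 y := by
    refine (cs_aux R w).trans ?_
    rw [mul_comm]
    exact mul_le_mul_of_nonneg_left hRy (l2_nonneg_aux _)
  calc 2 * lam * |∑ r, R r * w r| * N ≤ 2 * lam * (l2 w * l2 y) * N := by gcongr
    _ = _ := by ring
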